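/- Let X be the punctured Möbius band with boundary circles C₁ and C₂. Suppose f : X → X is a boundary-preserving map with f(C₁) ⊆ C₁ such that the restriction, viewed as a map f|C₁ : C₁ → C₁, is essential, while the restriction f|C₂ : C₂ → ∂X is inessential. Then f is boundary-homotopic to a map g : X → X having no fixed points in X ∖ ∂X, i.e., every fixed point of g lies in ∂X. -/

import Mathlib

open Set

namespace PMB

/-- The square [0,1] × [−1,1] as a subspace of ℝ². -/
def Sq : Set (ℝ × ℝ) := Set.Icc 0 1 ×ˢ Set.Icc (-1) 1

/-- The identification (0,y) ∼ (1,−y) on the square. -/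
def rel (p q : Sq) : Prop :=
  (p : ℝ × ℝ) = (q : ℝ × ℝ) ∨
  ((p : ℝ × ℝ).1 = 0 ∧ (q : ℝ × ℝ).1 = 1 ∧ (p : ℝ × ℝ).2 = -(q : ℝ × ℝ).2) ∨
  ((p : ℝ × ℝ).1 = 1 ∧ (q : ℝ × ℝ).1 = 0 ∧ (q : ℝ × ℝ).2 = -(p : ℝ × ℝ).2)

/-- The Möbius band: the quotient of the square by the identification. -/
def M := Quot rel

instance : TopologicalSpace M := inferInstanceAs (TopologicalSpace (Quot rel))

/-- The quotient map. -/
def qm : Sq → M := Quot.mk rel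

/-- The open disc of radius 1/4 centred at (1/2, 0). -/
def Bdisc : Set (ℝ × ℝ) := Metric.ball (1/2, 0) (1/4)

/-- The circle of radius 1/4 centred at (1/2, 0). -/
def Scirc : Set (ℝ × ℝ) := Metric.sphere (1/2, 0) (1/4)

/-- The punctured Möbius band, as a subset of the Möbius band. -/
def Xset : Set M := {m | m ∉ qm '' {p : Sq | (p : ℝ × ℝ) ∈ Bdisc}}

/-- The punctured Möbius band as a topological space. -/
abbrev X : Type := ↥Xset

/-- The boundary circle of the Möbius band. -/
def C1 : Set X := {x | ∃ p : Sq, qm p = (x : M) ∧ ((p : ℝ × ℝ).2 = 1 ∨ (p : ℝ × ℝ).2 = -1)}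

/-- The boundary circle coming from the removed disc. -/
def C2 : Set X := {x | ∃ p : Sq, qm p = (x : M) ∧ (p : ℝ × ℝ) ∈ Scirc}

/-- The boundary of the punctured Möbius band. -/
def Bd : Set X := C1 ∪ C2

/-- A self-map of the punctured Möbius band is boundary-preserving if it sends ∂X into ∂X. -/
def BoundaryPreserving (f : C(X, X)) : Prop := MapsTo f Bd Bd

/-- Two self-maps are boundary-homotopic if there is a homotopy between them keeping
∂X inside ∂X at all times. -/
def BoundaryHomotopic (f g : C(X, X)) : Prop :=
  ∃ H : ContinuousMap.Homotopy f g, ∀ x : X, x ∈ Bd → ∀ t : unitInterval, H (t, x) ∈ Bd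

/-- A continuous map is inessential if it is homotopic to a constant map. -/
def Inessential {α β : Type*} [TopologicalSpace α] [TopologicalSpace β] (f : C(α, β)) : Prop :=
  ∃ b : β, ContinuousMap.Homotopic f (ContinuousMap.const α b)

/-- A continuous map is essential if it is not homotopic to a constant map. -/
def Essential {α β : Type*} [TopologicalSpace α] [TopologicalSpace β] (f : C(α, β)) : Prop :=
  ¬ Inessential f

/-- The restriction of a self-map of X to a subset `s` mapped into a subset `t`,
as a continuous map between the subspaces. -/
def restrictMap (f : C(X, X)) {s t : Set X} (h : MapsTo f s t) : C(s, t) :=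
  ⟨fun x => ⟨f x, h x.2⟩, Continuous.subtype_mk (f.continuous.comp continuous_subtype_val) _⟩

/-! ### The theta graph -/

/-- The theta graph, embedded in `ℝ × ℝ³`. -/
def Th : Set (ℝ × (Fin 3 → ℝ)) :=
  {z | ∃ (l : Fin 3) (r : ℝ), 0 ≤ r ∧ r ≤ 1 ∧ z = (r, Pi.single l (r * (1 - r)))}

abbrev Theta : Type := ↥Th

/-- Clamp to the unit interval. -/
def clp (t : ℝ) : ℝ := max 0 (min t 1)

lemma clp_nonneg (t : ℝ) : 0 ≤ clp t := le_max_left _ _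
lemma clp_le (t : ℝ) : clp t ≤ 1 := max_le zero_le_one (min_le_right _ _)
lemma clp_of {t : ℝ} (h0 : 0 ≤ t) (h1 : t ≤ 1) : clp t = t := by
  simp [clp, h0, h1]
lemma clp_nonpos {t : ℝ} (h0 : t ≤ 0) : clp t = 0 := by
  unfold clp; rw [max_eq_left]; exact (min_le_left _ _).trans h0
lemma clp_one_le {t : ℝ} (h0 : 1 ≤ t) : clp t = 1 := by
  unfold clp; rw [min_eq_right h0]; simp
lemma clp_sub (t : ℝ) : clp (1 - t) = 1 - clp t := by
  unfold clp
  rcases le_total t 0 with h | h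
  · rw [min_eq_right (by linarith), min_eq_left (by linarith), max_eq_left h]; norm_num
  · rcases le_total t 1 with h' | h'
    · rw [min_eq_left (by linarith), min_eq_left (by linarith), max_eq_right h,
        max_eq_right (by linarith)]
    · rw [min_eq_left (by linarith), min_eq_right (by linarith), max_eq_left (by linarith)]
      norm_num
lemma continuous_clp : Continuous clp := by unfold clp; fun_prop

/-- orientation coordinate -/
def ori (τ : Bool) (t : ℝ) : ℝ := if τ then 1 - t else t

lemma ori_ori (τ : Bool) (t : ℝ) : ori τ (ori τ t) = t := by cases τ <;> simp [ori]
lemma ori_nonneg (τ : Bool) {t : ℝ} (h0 : 0 ≤ t) (h1 : t ≤ 1) : 0 ≤ ori τ t := by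
  cases τ <;> simp [ori] <;> linarith
lemma ori_le (τ : Bool) {t : ℝ} (h0 : 0 ≤ t) (h1 : t ≤ 1) : ori τ t ≤ 1 := by
  cases τ <;> simp [ori] <;> linarith
lemma ori_not (τ : Bool) (t : ℝ) : ori (!τ) t = 1 - ori τ t := by cases τ <;> simp [ori]
lemma ori_sub (τ : Bool) (t : ℝ) : ori τ (1 - t) = 1 - ori τ t := by cases τ <;> simp [ori]
lemma continuous_ori (τ : Bool) : Continuous (ori τ) := by
  cases τ
  · have : ori false = id := by funext t; simp [ori]
    rw [this]; exact continuous_id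
  · have : ori true = fun t => 1 - t := by funext t; simp [ori]
    rw [this]; fun_prop

/-- The point on the edge `l` at distance `t` from the vertex of type `τ`. -/
def Ed (τ : Bool) (l : Fin 3) (t : ℝ) : Theta :=
  ⟨(ori τ (clp t), Pi.single l (ori τ (clp t) * (1 - ori τ (clp t)))),
    l, ori τ (clp t), ori_nonneg τ (clp_nonneg t) (clp_le t), ori_le τ (clp_nonneg t) (clp_le t),
    rfl⟩

lemma continuous_Ed (τ : Bool) (l : Fin 3) : Continuous (Ed τ l) := by
  have h : Continuous fun t => ori τ (clp t) := (continuous_ori τ).comp continuous_clp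
  refine Continuous.subtype_mk (h.prodMk ?_) _
  exact (continuous_single l).comp (h.mul (continuous_const.sub h))

lemma Ed_not (τ : Bool) (l : Fin 3) (t : ℝ) : Ed (!τ) l t = Ed τ l (1 - t) := by
  unfold Ed
  simp only [clp_sub, ori_not, ori_sub]

lemma Ed_zero (τ : Bool) (l l' : Fin 3) {t t' : ℝ} (h : t ≤ 0) (h' : t' ≤ 0) :
    Ed τ l t = Ed τ l' t' := by
  unfold Ed
  simp only [clp_nonpos h, clp_nonpos h']
  cases τ <;> simp [ori]

/-- vertex of type τ -/
def vtx (τ : Bool) : Theta := Ed τ 0 0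

lemma Ed_eq_vtx (τ : Bool) (l : Fin 3) {t : ℝ} (h : t ≤ 0) : Ed τ l t = vtx τ :=
  Ed_zero τ l 0 h le_rfl

lemma Ed_eq_vtx' (τ : Bool) (l : Fin 3) {t : ℝ} (h : 1 ≤ t) : Ed τ l t = vtx (!τ) := by
  rw [← Ed_eq_vtx (!τ) l (t := 1 - t) (by linarith), Ed_not]; congr 1; ring

/-- distance to the vertex of type `τ` -/
def pos (τ : Bool) (z : Theta) : ℝ := ori τ z.1.1

lemma continuous_pos (τ : Bool) : Continuous (pos τ) :=
  (continuous_ori τ).comp (continuous_fst.comp continuous_subtype_val)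

lemma pos_not (τ : Bool) (z : Theta) : pos (!τ) z = 1 - pos τ z := ori_not _ _

lemma pos_nonneg (τ : Bool) (z : Theta) : 0 ≤ pos τ z := by
  obtain ⟨z, l, r, h0, h1, rfl⟩ := z; exact ori_nonneg τ h0 h1
lemma pos_le (τ : Bool) (z : Theta) : pos τ z ≤ 1 := by
  obtain ⟨z, l, r, h0, h1, rfl⟩ := z; exact ori_le τ h0 h1

/-- The closed edge with label `l`. -/
def Pc (l : Fin 3) : Set Theta := {z | ∀ j, j ≠ l → z.1.2 j = 0}

lemma isClosed_Pc (l : Fin 3) : IsClosed (Pc l) := by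
  have : Pc l = ⋂ j : Fin 3, ⋂ _ : j ≠ l, {z : Theta | z.1.2 j = 0} := by
    ext z; simp [Pc]
  rw [this]
  refine isClosed_iInter fun j => isClosed_iInter fun _ => ?_
  exact isClosed_eq (by fun_prop) continuous_const

lemma Ed_mem_Pc (τ : Bool) (l : Fin 3) (t : ℝ) : Ed τ l t ∈ Pc l := by
  intro j hj; simp [Ed, hj]

lemma exists_Pc (z : Theta) : ∃ l, z ∈ Pc l := by
  obtain ⟨z, l, r, h0, h1, rfl⟩ := z
  exact ⟨l, fun j hj => by simp [hj]⟩

lemma val_of_Pc {z : Theta} {l : Fin 3} (h : z ∈ Pc l) :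
    z.1 = (z.1.1, Pi.single l (z.1.1 * (1 - z.1.1))) := by
  obtain ⟨z, l', r, h0, h1, rfl⟩ := z
  refine Prod.ext rfl ?_
  by_cases hl : l' = l
  · subst hl; rfl
  · have := h l' hl
    simp only [Pi.single_eq_same] at this
    simp [this]

lemma eq_Ed_of_Pc {z : Theta} {l : Fin 3} (h : z ∈ Pc l) (τ : Bool) : z = Ed τ l (pos τ z) := by
  apply Subtype.ext
  rw [val_of_Pc h]
  have e := clp_of (pos_nonneg τ z) (pos_le τ z)
  simp only [Ed, e]
  simp only [pos, ori_ori]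

/-- some label -/
noncomputable def lab (z : Theta) : Fin 3 := (exists_Pc z).choose
lemma lab_mem (z : Theta) : z ∈ Pc (lab z) := (exists_Pc z).choose_spec

lemma Pc_unique {z : Theta} {l l' : Fin 3} (h : z ∈ Pc l) (h' : z ∈ Pc l') (τ : Bool)
    (h0 : 0 < pos τ z) (h1 : pos τ z < 1) : l = l' := by
  by_contra hne
  have e := h' l hne
  rw [val_of_Pc h] at e
  simp only [Pi.single_eq_same] at e
  rcases mul_eq_zero.1 e with e | e <;> cases τ <;> simp [pos, ori, e] at h0 h1 <;> linarith

lemma eq_vtx_of_pos {z : Theta} {τ : Bool} (h : pos τ z = 0) : z = vtx τ := by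
  rw [eq_Ed_of_Pc (lab_mem z) τ, Ed_eq_vtx _ _ h.le]

/-! ### Words -/

/-- reduced words -/
def okW : List (Fin 3) → Prop
  | [] => True
  | [a] => a = 2
  | a :: b :: w => a ≠ b ∧ okW (b :: w)

/-- toggling -/
def togW (l : Fin 3) : List (Fin 3) → List (Fin 3)
  | [] => if l = 2 then [2] else []
  | a :: w => if a = l then w else l :: a :: w

lemma okW_tail {a : Fin 3} {w : List (Fin 3)} (h : okW (a :: w)) : okW w := by
  cases w with
  | nil => trivial
  | cons b w => exact h.2

lemma okW_togW (l : Fin 3) (w : List (Fin 3)) (h : okW w) : okW (togW l w) := by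
  cases w with
  | nil => by_cases hl : l = 2 <;> simp [togW, hl, okW]
  | cons a w =>
    by_cases hl : a = l
    · simp only [togW, hl, if_true]; exact okW_tail h
    · simp only [togW, hl, if_false]; exact ⟨fun e => hl e.symm, h⟩

lemma togW_togW (l : Fin 3) (w : List (Fin 3)) (h : okW w) : togW l (togW l w) = w := by
  cases w with
  | nil => by_cases hl : l = 2 <;> simp [togW, hl]
  | cons a w =>
    by_cases hl : a = l
    · subst hl
      cases w with
      | nil => have : a = 2 := h
               simp [togW, this]
      | cons b w => have : b ≠ a := fun e => h.1 e.symm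
                    simp [togW, this]
    · simp [togW, hl]

/-- The fibre of the covering. -/
def Vx : Type := {w : List (Fin 3) // okW w}

instance : TopologicalSpace Vx := ⊥
instance : DiscreteTopology Vx := ⟨rfl⟩

def tog (l : Fin 3) (v : Vx) : Vx := ⟨togW l v.1, okW_togW l v.1 v.2⟩
lemma tog_tog (l : Fin 3) (v : Vx) : tog l (tog l v) = v := Subtype.ext (togW_togW l v.1 v.2)
def nilV : Vx := ⟨[], trivial⟩
lemma tog_nil {l : Fin 3} (h : l ≠ 2) : tog l nilV = nilV := Subtype.ext (by simp [tog, togW, nilV, h])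

/-- parity of a word -/
def par : List (Fin 3) → Bool
  | [] => false
  | _ :: w => !(par w)

/-- The geodesic path in the theta graph described by a word. -/
noncomputable def pth (σ : Bool) : List (Fin 3) → ℝ → Theta
  | [], _ => vtx σ
  | l :: w, s => if s ≤ w.length then pth σ w s else Ed (xor σ (par w)) l (s - w.length)

lemma pth_end (σ : Bool) (w : List (Fin 3)) {s : ℝ} (h : (w.length : ℝ) ≤ s) :
    pth σ w s = vtx (xor σ (par w)) := by
  cases w with
  | nil => simp [pth, par]
  | cons l w =>
    simp only [List.length_cons, Nat.cast_add, Nat.cast_one] at h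
    rw [pth, if_neg (by linarith), Ed_eq_vtx' _ _ (by linarith)]
    simp [par]

lemma pth_zero (σ : Bool) (w : List (Fin 3)) {s : ℝ} (hs : s ≤ 0) : pth σ w s = vtx σ := by
  induction w with
  | nil => rfl
  | cons l w ih => rw [pth, if_pos (hs.trans (by positivity)), ih]

lemma continuous_pth (σ : Bool) (w : List (Fin 3)) : Continuous (pth σ w) := by
  induction w with
  | nil => exact continuous_const
  | cons l w ih =>
    refine Continuous.if_le ih ((continuous_Ed _ _).comp (by fun_prop)) continuous_id
      continuous_const ?_
    intro x hx
    rw [pth_end σ w hx.ge]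
    rw [Ed_eq_vtx _ _ (by linarith [show x = (w.length : ℝ) from hx])]

/-- the explicit contraction in a chart, along edge `l` -/
noncomputable def DL (τ : Bool) (l : Fin 3) (w : List (Fin 3)) (s : ℝ) (z : Theta) : Theta :=
  match w with
  | [] => if l = 2 then pth τ [2] (min s (pos τ z)) else z
  | a :: w => if a = l then pth (xor τ (!(par w))) (a :: w) (min s (w.length + 1 - pos τ z))
      else pth (xor τ (!(par w))) (l :: a :: w) (min s (w.length + 1 + pos τ z))

lemma continuous_DL (τ : Bool) (l : Fin 3) (w : List (Fin 3)) :
    Continuous fun p : ℝ × Theta => DL τ l w p.1 p.2 := by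
  have hp := continuous_pos τ
  cases w with
  | nil =>
    by_cases hl : l = 2
    · simp only [DL, hl, if_true]
      exact (continuous_pth _ _).comp (by fun_prop)
    · simp only [DL, hl, if_false]; fun_prop
  | cons a w =>
    by_cases hl : a = l
    · simp only [DL, hl, if_true]
      exact (continuous_pth _ _).comp (by fun_prop)
    · simp only [DL, hl, if_false]
      exact (continuous_pth _ _).comp (by fun_prop)

lemma DL_vtx (τ : Bool) (l l' : Fin 3) (w : List (Fin 3)) (s : ℝ) {z : Theta}
    (hz : pos τ z = 0) : DL τ l w s z = DL τ l' w s z := by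
  have key : ∀ l, DL τ l w s z = pth (xor τ (par w)) w (min s w.length) := by
    intro l
    cases w with
    | nil =>
      by_cases hl : l = 2
      · simp only [DL, hl, if_true, hz]
        rw [pth_zero _ _ (min_le_right _ _)]; simp [pth, par]
      · simp only [DL, hl, if_false]; rw [eq_vtx_of_pos hz]; simp [pth, par]
    | cons a w =>
      by_cases hl : a = l
      · simp only [DL, hl, if_true, hz, par]; simp
      · simp only [DL, hl, if_false, hz, par]
        rw [pth, if_pos]
        · simp
        · simp
  rw [key l, key l']

lemma DL_change (τ : Bool) (l : Fin 3) (w : List (Fin 3)) (hw : okW w) (s : ℝ) (z : Theta) :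
    DL (!τ) l (togW l w) s z = DL τ l w s z := by
  cases w with
  | nil =>
    by_cases hl : l = 2
    · simp [DL, hl, togW, par, pos_not]
    · simp [DL, hl, togW]
  | cons a w =>
    by_cases hl : a = l
    · subst hl
      cases w with
      | nil => have : a = 2 := hw
               subst this
               simp [DL, togW, par, pos_not]
      | cons b w => have : b ≠ a := fun e => hw.1 e.symm
                    simp [togW, this, DL, par, pos_not]
                    congr 2; ring
    · simp [DL, hl, togW, par, pos_not]
      congr 2; ring

lemma DL_big (τ : Bool) (l : Fin 3) (w : List (Fin 3)) {s : ℝ} {z : Theta} (hz : z ∈ Pc l)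
    (hs : (w.length : ℝ) + 1 ≤ s) : DL τ l w s z = z := by
  have h0 := pos_nonneg τ z
  have h1 := pos_le τ z
  have gen : ∀ (σ : Bool) (l : Fin 3) (w : List (Fin 3)) (t : ℝ), 0 ≤ t →
      pth σ (l :: w) (w.length + t) = Ed (xor σ (par w)) l t := by
    intro σ l w t ht
    rw [pth]
    split_ifs with h
    · have : t = 0 := by linarith
      rw [pth_end _ _ (by linarith), Ed_eq_vtx _ _ this.le]
    · congr 1; ring
  cases w with
  | nil =>
    by_cases hl : l = 2
    · simp only [DL, hl, if_true]
      rw [min_eq_right (by simp at hs; linarith)]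
      have := gen τ 2 [] (pos τ z) h0
      simp [par] at this
      rw [this, ← hl]; exact (eq_Ed_of_Pc hz τ).symm
    · simp only [DL, hl, if_false]
  | cons a w =>
    simp only [List.length_cons, Nat.cast_add, Nat.cast_one] at hs
    by_cases hl : a = l
    · simp only [DL, hl, if_true]
      rw [min_eq_right (by linarith)]
      have := gen (xor τ (!(par w))) l w (1 - pos τ z) (by linarith)
      rw [show (w.length : ℝ) + 1 - pos τ z = w.length + (1 - pos τ z) by ring, this]
      have e : xor (xor τ (!(par w))) (par w) = !τ := by cases τ <;> cases par w <;> rfl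
      rw [e, ← pos_not]; exact (eq_Ed_of_Pc hz _).symm
    · simp only [DL, hl, if_false]
      rw [min_eq_right (by linarith)]
      have := gen (xor τ (!(par w))) l (a :: w) (pos τ z) h0
      simp only [List.length_cons, Nat.cast_add, Nat.cast_one] at this
      rw [this]
      have e : xor (xor τ (!(par w))) (par (a :: w)) = τ := by
        simp only [par]; cases τ <;> cases par w <;> rfl
      rw [e]; exact (eq_Ed_of_Pc hz _).symm

lemma DL_zero (τ : Bool) (l : Fin 3) (w : List (Fin 3)) (z : Theta) (h : ¬ (w = [] ∧ l ≠ 2)) :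
    ∃ σ, DL τ l w 0 z = vtx σ := by
  have h0 := pos_nonneg τ z
  have h1 := pos_le τ z
  cases w with
  | nil =>
    have hl : l = 2 := by simpa using h
    exact ⟨τ, by simp only [DL, hl, if_true]; exact pth_zero _ _ (min_le_left _ _)⟩
  | cons a w =>
    by_cases hl : a = l
    · exact ⟨_, by simp only [DL, hl, if_true]; exact pth_zero _ _ (min_le_left _ _)⟩
    · exact ⟨_, by simp only [DL, hl, if_false]; exact pth_zero _ _ (min_le_left _ _)⟩

/-! ### The covering space -/

/-- the two star charts -/
def Us (i : Bool) : Set Theta := {z | pos i z < 1}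

lemma isOpen_Us (i : Bool) : IsOpen (Us i) := isOpen_lt (continuous_pos i) continuous_const

lemma overlap {i j : Bool} (hij : i ≠ j) {z : Theta} (hi : z ∈ Us i) (hj : z ∈ Us j) :
    0 < pos i z := by
  have : j = !i := by cases i <;> cases j <;> simp_all
  subst this
  have := pos_not i z
  simp only [Us, mem_ofPred_eq] at hj
  linarith

lemma lab_locConst {z : Theta} (i : Bool) (h0 : 0 < pos i z) (h1 : pos i z < 1) :
    ∀ᶠ y in nhds z, lab y = lab z := by
  have hz : z.1.2 (lab z) ≠ 0 := by
    rw [val_of_Pc (lab_mem z)]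
    simp only [Pi.single_eq_same]
    cases i <;> simp [pos, ori] at h0 h1 <;> exact mul_ne_zero (by linarith) (by linarith)
  have hc : Continuous fun y : Theta => y.1.2 (lab z) := by fun_prop
  filter_upwards [hc.continuousAt.eventually_ne hz] with y hy
  by_contra hne
  exact hy (lab_mem y (lab z) (Ne.symm hne))

open Classical in
/-- The bundle core of the covering. -/
noncomputable def Zc : FiberBundleCore Bool Theta Vx where
  baseSet := Us
  isOpen_baseSet := isOpen_Us
  indexAt z := if pos false z < 1 then false else true
  mem_baseSet_at z := by
    split_ifs with h
    · exact h
    · have := pos_not false z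
      simp only [Bool.not_false] at this
      simp only [Us, mem_ofPred_eq]; linarith
  coordChange i j z v := if i = j then v else tog (lab z) v
  coordChange_self i z _ v := by simp
  continuousOn_coordChange i j := by
    by_cases hij : i = j
    · simp only [hij, if_true]; fun_prop
    · simp only [hij, if_false]
      rintro ⟨z, v⟩ ⟨⟨hi, hj⟩, -⟩
      apply ContinuousAt.continuousWithinAt
      have h1 := lab_locConst i (overlap hij hi hj) hi
      have hc : ContinuousAt (fun _ : Theta × Vx => tog (lab z) v) (z, v) := continuousAt_const
      refine hc.congr ?_
      have h2 : ∀ᶠ p : Theta × Vx in nhds (z, v), lab p.1 = lab z :=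
        (continuous_fst.tendsto (z, v)).eventually h1
      have h3 : ∀ᶠ p : Theta × Vx in nhds (z, v), p.2 = v :=
        (continuous_snd.tendsto (z, v)).eventually (p := fun u => u = v) (by simp [nhds_discrete])
      filter_upwards [h2, h3] with p e1 e2
      rw [e1, e2]
  coordChange_comp i j k z _ v := by
    cases i <;> cases j <;> cases k <;> simp [tog_tog]

lemma Zc_ne {i j : Bool} (h : ¬ i = j) (z : Theta) (v : Vx) :
    Zc.coordChange i j z v = tog (lab z) v := if_neg h

/-- The covering space. -/
abbrev Acov : Type := Zc.TotalSpace

lemma isCov : IsCoveringMap (Zc.proj) := by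
  refine IsCoveringMap.mk (F := fun _ => Vx) Zc.proj (fun z => Zc.localTrivAt z) ?_
  intro z; exact Zc.mem_localTrivAt_baseSet z

/-- label of a point in chart `i` -/
noncomputable def lbl (i : Bool) (a : Acov) : Vx := Zc.coordChange (Zc.indexAt a.1) i a.1 a.2

/-- contraction in a chart -/
noncomputable def Dch (i : Bool) (v : Vx) (s : ℝ) (z : Theta) : Theta := DL i (lab z) v.1 s z

/-- The contraction of the covering space to the circle, projected to the theta graph. -/
noncomputable def Dc (p : ℝ × Acov) : Theta := Dch (Zc.indexAt p.2.1) p.2.2 p.1 p.2.1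

lemma Dc_chart (i : Bool) (s : ℝ) (a : Acov) (ha : a.1 ∈ Us i) :
    Dc (s, a) = Dch i (lbl i a) s a.1 := by
  show Dch (Zc.indexAt a.1) a.2 s a.1 = _
  by_cases h : Zc.indexAt a.1 = i
  · subst h
    exact (congrArg (fun v => Dch _ v s a.1) (Zc.coordChange_self _ _ ha a.2)).symm
  · have hi : i = !(Zc.indexAt a.1) := by
      revert h; cases i <;> cases Zc.indexAt a.1 <;> simp
    have : lbl i a = tog (lab a.1) a.2 := Zc_ne h _ _
    rw [this, hi]
    exact (DL_change _ _ _ (Subtype.property (p := okW) a.2) s a.1).symm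

lemma Dch_eq {i : Bool} {v : Vx} {s : ℝ} {z : Theta} {l : Fin 3} (hz : z ∈ Us i) (hl : z ∈ Pc l) :
    Dch i v s z = DL i l v.1 s z := by
  rcases (pos_nonneg i z).eq_or_lt with h | h
  · exact DL_vtx _ _ _ _ _ h.symm
  · unfold Dch; rw [Pc_unique (lab_mem z) hl i h hz]

lemma continuousOn_Dch (i : Bool) (v : Vx) :
    ContinuousOn (fun p : ℝ × Theta => Dch i v p.1 p.2) {p | p.2 ∈ Us i} := by
  rw [continuousOn_iff_continuous_domRestrict]
  have hcov : (⋃ l : Fin 3, {p : {p : ℝ × Theta | p.2 ∈ Us i} | p.1.2 ∈ Pc l}) = univ := by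
    ext p; simp [exists_Pc]
  refine (locallyFinite_of_finite _).continuous (f := fun l : Fin 3 =>
    {p : {p : ℝ × Theta | p.2 ∈ Us i} | p.1.2 ∈ Pc l}) hcov ?_ ?_
  · intro l; exact (isClosed_Pc l).preimage (by fun_prop)
  · intro l
    have : Continuous fun p : {p : ℝ × Theta | p.2 ∈ Us i} => DL i l v.1 p.1.1 p.1.2 :=
      (continuous_DL i l v.1).comp continuous_subtype_val
    refine this.continuousOn.congr ?_
    intro p hp
    exact Dch_eq p.2 hp

lemma continuousOn_triv (i : Bool) : ContinuousOn (fun a : Acov => (a.1, lbl i a)) {a | a.1 ∈ Us i} :=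
  (Zc.localTriv i).continuousOn

lemma lbl_locConst (i : Bool) {a : Acov} (ha : a.1 ∈ Us i) :
    ∀ᶠ b in nhds a, b.1 ∈ Us i ∧ lbl i b = lbl i a := by
  have ho : IsOpen {a : Acov | a.1 ∈ Us i} := (isOpen_Us i).preimage Zc.continuous_proj
  have h1 : ∀ᶠ b in nhds a, b.1 ∈ Us i := ho.mem_nhds ha
  have hc : ContinuousAt (fun a : Acov => (a.1, lbl i a)) a :=
    (continuousOn_triv i).continuousAt (ho.mem_nhds ha)
  have h2 := (continuous_snd.continuousAt.comp hc).eventually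
    (p := fun v => v = lbl i a) (by simp [nhds_discrete])
  exact h1.and h2

lemma mem_index (z : Theta) : z ∈ Us (Zc.indexAt z) := Zc.mem_baseSet_at z

lemma continuous_Dc : Continuous Dc := by
  rw [continuous_iff_continuousAt]
  rintro ⟨s, a⟩
  have hi := mem_index a.1
  set i := Zc.indexAt a.1
  have h1 := (continuous_snd.tendsto (s, a)).eventually (lbl_locConst i hi)
  have h2 : ContinuousAt (fun p : ℝ × Acov => Dch i (lbl i a) p.1 p.2.1) (s, a) := by
    have ho : IsOpen {p : ℝ × Theta | p.2 ∈ Us i} := (isOpen_Us i).preimage continuous_snd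
    have := (continuousOn_Dch i (lbl i a)).continuousAt (x := (s, a.1)) (ho.mem_nhds hi)
    refine ContinuousAt.comp (g := fun p : ℝ × Theta => Dch i (lbl i a) p.1 p.2) (f := fun p : ℝ × Acov => (p.1, p.2.1)) this ?_
    exact (continuous_fst.prodMk (Zc.continuous_proj.comp continuous_snd)).continuousAt
  refine h2.congr ?_
  filter_upwards [h1] with p hp
  rw [show p = (p.1, p.2) from rfl, Dc_chart i _ _ hp.1, hp.2]

/-- the circle in the theta graph -/
def Ct : Set Theta := {z | z.1.2 2 = 0}

lemma vtx_mem (τ : Bool) : vtx τ ∈ Ct := by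
  simp only [vtx]; exact Ed_mem_Pc τ 0 0 2 (by decide)

lemma Ct_lab {z : Theta} (h : z ∈ Ct) (i : Bool) (h0 : 0 < pos i z) (h1 : pos i z < 1) :
    lab z ≠ 2 := by
  intro e
  have hz := val_of_Pc (lab_mem z)
  rw [e] at hz
  have : z.1.2 2 = z.1.1 * (1 - z.1.1) := by rw [hz]; simp
  simp only [Ct, mem_ofPred_eq] at h
  rw [h] at this
  cases i <;> simp [pos, ori] at h0 h1
  · exact absurd this.symm (mul_ne_zero (by linarith) (by linarith))
  · exact absurd this.symm (mul_ne_zero (by linarith) (by linarith))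

lemma Pc_Ct {z : Theta} {l : Fin 3} (h : z ∈ Pc l) (hl : l ≠ 2) : z ∈ Ct := h 2 (Ne.symm hl)

/-- The section over the circle. -/
noncomputable def sec (z : Theta) : Acov := ⟨z, nilV⟩

lemma lbl_sec {i : Bool} {z : Theta} (hz : z ∈ Ct) (hi : z ∈ Us i) : lbl i (sec z) = nilV := by
  unfold lbl sec
  by_cases h : Zc.indexAt z = i
  · simp only [h]; exact Zc.coordChange_self i _ hi _
  · have : Zc.coordChange (Zc.indexAt z) i z nilV = tog (lab z) nilV := by
      exact Zc_ne h _ _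
    refine this.trans (tog_nil (Ct_lab hz i ?_ hi))
    exact overlap (Ne.symm h) hi (mem_index z)

lemma continuous_sec : Continuous fun z : Ct => sec z.1 := by
  rw [continuous_iff_continuousAt]
  intro z
  have hi := mem_index z.1
  set i := Zc.indexAt z.1
  refine ((Zc.localTriv i).toOpenPartialHomeomorph.continuousAt_iff_continuousAt_comp_left ?_).2 ?_
  · exact ((isOpen_Us i).preimage continuous_subtype_val).mem_nhds hi
  · have : ContinuousAt (fun y : Ct => (y.1, nilV)) z := by fun_prop
    refine this.congr ?_
    filter_upwards [((isOpen_Us i).preimage continuous_subtype_val).mem_nhds hi] with y hy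
    exact Prod.ext rfl (lbl_sec y.2 hy).symm

lemma Dc_sec (s : ℝ) {z : Theta} (hz : z ∈ Ct) : Dc (s, sec z) = z := by
  show Dch (Zc.indexAt z) nilV s z = z
  have hi := mem_index z
  set i := Zc.indexAt z
  rcases (pos_nonneg i z).eq_or_lt with h | h
  · rw [Dch, DL_vtx i (lab z) 0 _ _ h.symm]; simp [DL, nilV]
  · have := Ct_lab hz i h hi
    simp [Dch, DL, nilV, this]

lemma Dc_zero_mem (a : Acov) : Dc (0, a) ∈ Ct := by
  by_cases h : (Subtype.val (p := okW) a.2) = [] ∧ lab a.1 ≠ 2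
  · have e : DL (Zc.indexAt a.1) (lab a.1) (Subtype.val (p := okW) a.2) 0 a.1 = a.1 := by
      rw [h.1]; simp [DL, h.2]
    have e' : Dc (0, a) = a.1 := e
    rw [e']; exact Pc_Ct (lab_mem a.1) h.2
  · obtain ⟨σ, e⟩ := DL_zero (Zc.indexAt a.1) (lab a.1) _ a.1 h
    have e' : Dc (0, a) = vtx σ := e
    rw [e']; exact vtx_mem σ

lemma Dc_zero_vtx {a : Acov} (h : a ≠ sec a.1) : ∃ σ, Dc (0, a) = vtx σ := by
  refine DL_zero (Zc.indexAt a.1) (lab a.1) _ a.1 ?_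
  rintro ⟨h1, -⟩
  apply h
  obtain ⟨z, v⟩ := a
  have : v = nilV := Subtype.ext (p := okW) h1
  rw [this]; rfl

lemma Dc_big_local (a : Acov) : ∃ N : ℝ, ∀ᶠ b in nhds a, ∀ s, N ≤ s → Dc (s, b) = b.1 := by
  have hi := mem_index a.1
  set i := Zc.indexAt a.1
  refine ⟨((lbl i a).1.length : ℝ) + 1, ?_⟩
  filter_upwards [lbl_locConst i hi] with b hb s hs
  rw [Dc_chart i _ _ hb.1, hb.2]
  exact DL_big _ _ _ (lab_mem _) hs

lemma Dc_big {K : Set Acov} (hK : IsCompact K) :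
    ∃ N : ℝ, 0 ≤ N ∧ ∀ a ∈ K, ∀ s, N ≤ s → Dc (s, a) = a.1 := by
  refine hK.induction_on (p := fun K => ∃ N : ℝ, 0 ≤ N ∧ ∀ a ∈ K, ∀ s, N ≤ s → Dc (s, a) = a.1)
    ⟨0, le_rfl, by simp⟩ ?_ ?_ ?_
  · rintro s t hst ⟨N, h0, hN⟩; exact ⟨N, h0, fun a ha => hN a (hst ha)⟩
  · rintro s t ⟨N, h0, hN⟩ ⟨N', h0', hN'⟩
    refine ⟨max N N', le_max_of_le_left h0, ?_⟩
    rintro a (ha | ha) u hu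
    · exact hN a ha u ((le_max_left _ _).trans hu)
    · exact hN' a ha u ((le_max_right _ _).trans hu)
  · intro a _
    obtain ⟨N, hN⟩ := Dc_big_local a
    exact ⟨_, mem_nhdsWithin_of_mem_nhds hN, max N 0, le_max_right _ _,
      fun b hb s hs => hb s ((le_max_left _ _).trans hs)⟩

/-! ### Geometry of the punctured Möbius band -/

/-- the norm whose unit ball is the square (coordinates `u = 2x-1`, `v = y`) -/
def nn (p : ℝ × ℝ) : ℝ := max |p.1| |p.2|
/-- the norm whose unit ball is the removed disc -/
def kk (p : ℝ × ℝ) : ℝ := max (2 * |p.1|) (4 * |p.2|)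

lemma continuous_nn : Continuous nn := by unfold nn; fun_prop
lemma continuous_kk : Continuous kk := by unfold kk; fun_prop
lemma kk_ge (p : ℝ × ℝ) : 2 * nn p ≤ kk p := by
  unfold nn kk
  rcases max_choice |p.1| |p.2| with h | h <;> rw [h]
  · exact le_max_left _ _
  · exact le_max_of_le_right (by linarith [abs_nonneg p.2])
lemma kk_le (p : ℝ × ℝ) : kk p ≤ 4 * nn p := by
  unfold nn kk
  apply max_le
  · linarith [le_max_left |p.1| |p.2|, abs_nonneg p.1]
  · linarith [le_max_right |p.1| |p.2|]
lemma nn_smul {c : ℝ} (hc : 0 ≤ c) (p : ℝ × ℝ) : nn (c • p) = c * nn p := by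
  simp [nn, abs_mul, abs_of_nonneg hc, mul_max_of_nonneg _ _ hc]
lemma kk_smul {c : ℝ} (hc : 0 ≤ c) (p : ℝ × ℝ) : kk (c • p) = c * kk p := by
  simp only [kk, Prod.smul_fst, Prod.smul_snd, smul_eq_mul, abs_mul, abs_of_nonneg hc,
    mul_max_of_nonneg _ _ hc]
  congr 1 <;> ring

/-- the square -/
def D : Set (ℝ × ℝ) := {p | nn p ≤ 1}
/-- the punctured square -/
def Q : Set (ℝ × ℝ) := {p | nn p ≤ 1 ∧ 1 ≤ kk p}

lemma nn_le_iff {p : ℝ × ℝ} : nn p ≤ 1 ↔ (-1 ≤ p.1 ∧ p.1 ≤ 1) ∧ (-1 ≤ p.2 ∧ p.2 ≤ 1) := by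
  simp [nn, abs_le]

lemma mem_D_of {u v : ℝ} (h1 : -1 ≤ u) (h2 : u ≤ 1) (h3 : -1 ≤ v) (h4 : v ≤ 1) : (u, v) ∈ D :=
  nn_le_iff.2 ⟨⟨h1, h2⟩, h3, h4⟩

lemma isCompact_D : IsCompact D := by
  have : D = Icc (-1) 1 ×ˢ Icc (-1) 1 := by
    ext p; exact nn_le_iff
  rw [this]; exact isCompact_Icc.prod isCompact_Icc

lemma isCompact_Q : IsCompact Q := by
  have : Q = D ∩ {p | 1 ≤ kk p} := rfl
  rw [this]
  exact isCompact_D.inter_right (isClosed_le continuous_const continuous_kk)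

instance : CompactSpace D := isCompact_iff_compactSpace.1 isCompact_D
instance : CompactSpace Q := isCompact_iff_compactSpace.1 isCompact_Q

/-- invariants separating points of `M` -/
def inv4 (p : Sq) : ℝ × ℝ × ℝ × ℝ :=
  (p.1.1 * (1 - p.1.1), p.1.2 * (1 - 2 * p.1.1), p.1.2 * (p.1.1 * (1 - p.1.1)),
    (1 - 2 * p.1.1) * (p.1.1 * (1 - p.1.1)))

lemma inv4_of_rel (p q : Sq) (h : rel p q) : inv4 p = inv4 q := by
  rcases h with h | ⟨h1, h2, h3⟩ | ⟨h1, h2, h3⟩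
  · rw [Subtype.ext h]
  · simp [inv4, h1, h2, h3]; ring
  · simp [inv4, h1, h2, h3]; ring

lemma rel_of_inv4 (p q : Sq) (h : inv4 p = inv4 q) : rel p q := by
  obtain ⟨⟨x, y⟩, hp⟩ := p
  obtain ⟨⟨x', y'⟩, hq⟩ := q
  simp only [inv4, Prod.mk.injEq] at h
  obtain ⟨h1, h2, h3, h4⟩ := h
  by_cases ha : x * (1 - x) = 0
  · have ha' : x' * (1 - x') = 0 := by rw [← h1, ha]
    have e : x = 0 ∨ x = 1 := by
      rcases mul_eq_zero.1 ha with h | h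
      · exact Or.inl h
      · exact Or.inr (by linarith)
    have e' : x' = 0 ∨ x' = 1 := by
      rcases mul_eq_zero.1 ha' with h | h
      · exact Or.inl h
      · exact Or.inr (by linarith)
    rcases e with rfl | rfl <;> rcases e' with rfl | rfl
    · left; simp; linarith
    · right; left; simp; linarith
    · right; right; simp; linarith
    · left; simp; linarith
  · left
    rw [← h1] at h3 h4
    have e1 := mul_right_cancel₀ ha h3
    have e2 := mul_right_cancel₀ ha h4
    simp; constructor <;> linarith

/-- separating map -/
def invM : M → ℝ × ℝ × ℝ × ℝ := Quot.lift inv4 inv4_of_rel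

lemma continuous_qm : Continuous qm := continuous_quot_mk

lemma continuous_invM : Continuous invM := by
  refine continuous_quot_lift _ ?_
  unfold inv4; fun_prop

lemma rel_of_qm {p q : Sq} (h : qm p = qm q) : rel p q :=
  rel_of_inv4 p q (congrArg invM h)

instance : T2Space M := by
  refine T2Space.of_injective_continuous (f := invM) ?_ continuous_invM
  rintro ⟨p⟩ ⟨q⟩ h
  exact Quot.sound (rel_of_inv4 p q h)

/-- square to square -/
noncomputable def toSq (p : D) : Sq :=
  ⟨((1 + p.1.1) / 2, p.1.2), by
    obtain ⟨⟨h1, h2⟩, h3, h4⟩ := nn_le_iff.1 p.2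
    exact ⟨⟨by simp; linarith, by simp; linarith⟩, ⟨h3, h4⟩⟩⟩

lemma continuous_toSq : Continuous toSq := Continuous.subtype_mk (by fun_prop) _

lemma toSq_surj (q : Sq) : ∃ p : D, toSq p = q := by
  obtain ⟨⟨x, y⟩, ⟨h1, h2⟩, h3, h4⟩ := q
  simp only at h1 h2 h3 h4
  refine ⟨⟨(2 * x - 1, y), mem_D_of ?_ ?_ h3 h4⟩, ?_⟩
  · linarith
  · linarith
  · apply Subtype.ext; simp [toSq]

lemma dist_toSq (p : D) : 4 * dist (toSq p : ℝ × ℝ) (1/2, 0) = kk p := by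
  simp only [toSq, Prod.dist_eq, Real.dist_eq, kk, mul_max_of_nonneg _ _ (show (0:ℝ) ≤ 4 by norm_num)]
  congr 1
  · rw [show (1 + p.1.1) / 2 - 1 / 2 = p.1.1 * (1/2) by ring, abs_mul]; norm_num; ring
  · simp

lemma rel_uv {p q : D} (h : qm (toSq p) = qm (toSq q)) : p = q ∨
    (p.1.1 = -1 ∧ q.1.1 = 1 ∧ p.1.2 = -q.1.2) ∨ (q.1.1 = -1 ∧ p.1.1 = 1 ∧ q.1.2 = -p.1.2) := by
  rcases rel_of_qm h with h | ⟨h1, h2, h3⟩ | ⟨h1, h2, h3⟩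
  · left
    simp only [toSq, Prod.mk.injEq] at h
    exact Subtype.ext (Prod.ext (by linarith) h.2)
  · right; left
    simp only [toSq] at h1 h2 h3
    exact ⟨by linarith, by linarith, h3⟩
  · right; right
    simp only [toSq] at h1 h2 h3
    exact ⟨by linarith, by linarith, h3⟩

lemma qm_glue {p q : D} (h1 : p.1.1 = -1) (h2 : q.1.1 = 1) (h3 : p.1.2 = -q.1.2) :
    qm (toSq p) = qm (toSq q) := by
  refine Quot.sound (Or.inr (Or.inl ⟨?_, ?_, h3⟩)) <;> simp [toSq, h1, h2]

/-- inclusion -/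
def QD (p : Q) : D := ⟨p.1, p.2.1⟩

lemma kk_of_nn {p : ℝ × ℝ} (h : nn p = 1) : 1 ≤ kk p := by linarith [kk_ge p]

lemma kk_eq_of_qm {p q : D} (h : qm (toSq p) = qm (toSq q)) : kk p = kk q ∨ (1 ≤ kk p ∧ 1 ≤ kk q) := by
  rcases rel_uv h with h | ⟨h1, h2, h3⟩ | ⟨h1, h2, h3⟩
  · left; rw [h]
  · left; simp [kk, h1, h2, h3]
  · left; simp [kk, h1, h2, h3]

lemma kk_lt_iff (p : D) : (toSq p : ℝ × ℝ) ∈ Bdisc ↔ kk p < 1 := by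
  rw [← dist_toSq]; simp only [Bdisc, Metric.mem_ball]; constructor <;> intro h <;> linarith
lemma kk_eq_iff (p : D) : (toSq p : ℝ × ℝ) ∈ Scirc ↔ kk p = 1 := by
  rw [← dist_toSq]; simp only [Scirc, Metric.mem_sphere]; constructor <;> intro h <;> linarith

lemma mem_Xset (p : D) : qm (toSq p) ∈ Xset ↔ 1 ≤ kk p := by
  constructor
  · intro h
    by_contra hk
    exact h ⟨toSq p, (kk_lt_iff p).2 (not_le.1 hk), rfl⟩
  · rintro h ⟨q, hq, e⟩
    obtain ⟨q, rfl⟩ := toSq_surj q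
    have hq := (kk_lt_iff q).1 hq
    rcases kk_eq_of_qm e with hkk | hkk
    · linarith
    · linarith [hkk.1]

/-- the quotient map onto the punctured Möbius band -/
noncomputable def π (p : Q) : X := ⟨qm (toSq (QD p)), (mem_Xset _).2 p.2.2⟩

lemma continuous_π : Continuous π := by
  refine Continuous.subtype_mk ?_ _
  exact continuous_qm.comp (continuous_toSq.comp (Continuous.subtype_mk continuous_subtype_val _))

lemma π_surj : Function.Surjective π := by
  rintro ⟨⟨q⟩, hq⟩
  obtain ⟨p, rfl⟩ := toSq_surj q
  exact ⟨⟨p.1, p.2, (mem_Xset p).1 hq⟩, rfl⟩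

lemma π_eq {p q : Q} (h : π p = π q) : p = q ∨
    (p.1.1 = -1 ∧ q.1.1 = 1 ∧ p.1.2 = -q.1.2) ∨ (q.1.1 = -1 ∧ p.1.1 = 1 ∧ q.1.2 = -p.1.2) := by
  rcases rel_uv (congrArg Subtype.val h) with h | h
  · exact Or.inl (Subtype.ext (congrArg (fun z : D => z.1) h))
  · exact Or.inr h

lemma π_glue {p q : Q} (h1 : p.1.1 = -1) (h2 : q.1.1 = 1) (h3 : p.1.2 = -q.1.2) : π p = π q :=
  Subtype.ext (qm_glue (p := QD p) (q := QD q) h1 h2 h3)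

/-- representative -/
noncomputable def rp (x : X) : Q := (π_surj x).choose
lemma π_rp (x : X) : π (rp x) = x := (π_surj x).choose_spec

instance : CompactSpace X := ⟨by
  rw [← π_surj.range_eq]; exact isCompact_range continuous_π⟩

/-- compatible with gluing -/
def Compat {Y : Type*} (g : Q → Y) : Prop :=
  ∀ p q : Q, p.1.1 = -1 → q.1.1 = 1 → p.1.2 = -q.1.2 → g p = g q

lemma Compat.eq {Y : Type*} {g : Q → Y} (h : Compat g) {p q : Q} (e : π p = π q) : g p = g q := by
  rcases π_eq e with rfl | ⟨h1, h2, h3⟩ | ⟨h1, h2, h3⟩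
  · rfl
  · exact h _ _ h1 h2 h3
  · exact (h _ _ h1 h2 h3).symm

lemma Compat.rp {Y : Type*} {g : Q → Y} (h : Compat g) (p : Q) : g (rp (π p)) = g p :=
  h.eq (π_rp _)

lemma isQuot (T : Type*) [TopologicalSpace T] :
    Topology.IsQuotientMap (fun q : T × Q => (q.1, π q.2)) := by
  have h : IsProperMap (Prod.map (id : T → T) π) :=
    isProperMap_id.prodMap continuous_π.isProperMap
  refine h.isClosedMap.isQuotientMap h.continuous ?_
  exact Function.surjective_id.prodMap π_surj

lemma desc_cont {T Y : Type*} [TopologicalSpace T] [TopologicalSpace Y] {g : T × Q → Y}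
    (hg : Continuous g) (hc : ∀ t, Compat fun p => g (t, p)) :
    Continuous fun q : T × X => g (q.1, rp q.2) := by
  rw [(isQuot T).continuous_iff]
  refine hg.congr ?_
  rintro ⟨t, p⟩
  exact ((hc t).rp p).symm

lemma desc_cont' {Y : Type*} [TopologicalSpace Y] {g : Q → Y}
    (hg : Continuous g) (hc : Compat g) : Continuous fun x : X => g (rp x) :=
  (desc_cont (T := Unit) (g := fun q => g q.2) (by fun_prop) (fun _ => hc)).comp
    (continuous_const.prodMk continuous_id : Continuous fun x : X => ((), x))

/-! ### Radial coordinate -/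

lemma nn_pos (p : Q) : 0 < nn p := by
  have := p.2.2; linarith [kk_le p.1]
lemma nn_lt_kk (p : Q) : nn p < kk p := by linarith [kk_ge p.1, nn_pos p]
lemma kk_pos (p : Q) : 0 < kk p := by linarith [p.2.2]

/-- radial coordinate -/
noncomputable def sQ (p : Q) : ℝ := nn p * (kk p - 1) / (kk p - nn p)

lemma continuous_sQ : Continuous sQ := by
  have h1 := continuous_nn
  have h2 := continuous_kk
  refine Continuous.div (by fun_prop) (by fun_prop) ?_
  intro p; linarith [nn_lt_kk p]

lemma sQ_nonneg (p : Q) : 0 ≤ sQ p :=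
  div_nonneg (mul_nonneg (nn_pos p).le (by linarith [p.2.2])) (by linarith [nn_lt_kk p])
lemma sQ_le (p : Q) : sQ p ≤ 1 := by
  rw [sQ, div_le_one (by linarith [nn_lt_kk p])]
  nlinarith [p.2.1, kk_pos p]
lemma sQ_eq_zero {p : Q} : sQ p = 0 ↔ kk p = 1 := by
  have h1 := nn_pos p
  have h2 := nn_lt_kk p
  rw [sQ, div_eq_zero_iff, mul_eq_zero]
  constructor
  · rintro ((h | h) | h) <;> linarith
  · intro h; left; right; linarith
lemma sQ_eq_one {p : Q} : sQ p = 1 ↔ nn p = 1 := by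
  have h1 := nn_pos p
  have h2 := nn_lt_kk p
  have h3 := kk_pos p
  rw [sQ, div_eq_one_iff_eq (by linarith)]
  constructor
  · intro h; exact mul_left_cancel₀ h3.ne' (by linarith)
  · intro h; rw [h]; ring

/-- scaling factor -/
noncomputable def lam (p : Q) (s : ℝ) : ℝ := (1 - clp s) / kk p + clp s / nn p

lemma lam_nonneg (p : Q) (s : ℝ) : 0 ≤ lam p s :=
  add_nonneg (div_nonneg (by linarith [clp_le s]) (kk_pos p).le)
    (div_nonneg (clp_nonneg s) (nn_pos p).le)

lemma lam_nn (p : Q) (s : ℝ) : lam p s * nn p = 1 - (1 - clp s) * ((kk p - nn p) / kk p) := by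
  have h1 := (nn_pos p).ne'
  have h2 := (kk_pos p).ne'
  unfold lam; field_simp; ring
lemma lam_kk (p : Q) (s : ℝ) : lam p s * kk p = 1 + clp s * ((kk p - nn p) / nn p) := by
  have h1 := (nn_pos p).ne'
  have h2 := (kk_pos p).ne'
  unfold lam; field_simp; ring

/-- radial move -/
noncomputable def Rad (p : Q) (s : ℝ) : Q := ⟨lam p s • p.1, by
  have h := nn_lt_kk p
  constructor
  · rw [nn_smul (lam_nonneg p s), lam_nn]
    have : 0 ≤ (1 - clp s) * ((kk p - nn p) / kk p) :=
      mul_nonneg (by linarith [clp_le s]) (div_nonneg (by linarith) (kk_pos p).le)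
    linarith
  · rw [kk_smul (lam_nonneg p s), lam_kk]
    have : 0 ≤ clp s * ((kk p - nn p) / nn p) :=
      mul_nonneg (clp_nonneg s) (div_nonneg (by linarith) (nn_pos p).le)
    linarith⟩

lemma continuous_Rad : Continuous fun q : Q × ℝ => Rad q.1 q.2 := by
  have h1 := continuous_nn
  have h2 := continuous_kk
  have h3 := continuous_clp
  have hl : Continuous fun q : Q × ℝ => lam q.1 q.2 := by
    unfold lam
    exact Continuous.add (Continuous.div (by fun_prop) (by fun_prop) fun q => (kk_pos q.1).ne')
      (Continuous.div (by fun_prop) (by fun_prop) fun q => (nn_pos q.1).ne')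
  have hv : Continuous fun q : Q × ℝ => q.1.1 := by fun_prop
  exact Continuous.subtype_mk (hl.smul hv) _

lemma sQ_Rad (p : Q) (s : ℝ) : sQ (Rad p s) = clp s := by
  have h1 := (nn_pos p).ne'
  have h2 := (kk_pos p).ne'
  have h3 : kk p - nn p ≠ 0 := by linarith [nn_lt_kk p]
  have h4 : lam p s ≠ 0 := by
    intro h
    have := lam_kk p s
    have h5 : 0 ≤ clp s * ((kk p - nn p) / nn p) :=
      mul_nonneg (clp_nonneg s) (div_nonneg (by linarith [nn_lt_kk p]) (nn_pos p).le)
    rw [h] at this; linarith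
  have e1 : nn (Rad p s).1 = lam p s * nn p := nn_smul (lam_nonneg p s) _
  have e2 : kk (Rad p s).1 = lam p s * kk p := kk_smul (lam_nonneg p s) _
  rw [sQ, e1, e2, ← mul_sub, lam_kk]
  field_simp
  ring

lemma Rad_self (p : Q) : Rad p (sQ p) = p := by
  have h1 := (nn_pos p).ne'
  have h2 := (kk_pos p).ne'
  have h3 : kk p - nn p ≠ 0 := by linarith [nn_lt_kk p]
  have : lam p (sQ p) = 1 := by
    unfold lam
    rw [clp_of (sQ_nonneg p) (sQ_le p), sQ]
    field_simp
    ring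
  apply Subtype.ext
  simp [Rad, this]

lemma nn_edge {p : Q} (h : |p.1.1| = 1) : nn p = 1 :=
  le_antisymm p.2.1 (h ▸ le_max_left _ _)

lemma compat_sQ : Compat sQ := by
  intro p q h1 h2 h3
  rw [sQ_eq_one.2 (nn_edge (by simp [h1])), sQ_eq_one.2 (nn_edge (by simp [h2]))]

/-- radial coordinate on `X` -/
noncomputable def sX (x : X) : ℝ := sQ (rp x)
lemma continuous_sX : Continuous sX := desc_cont' continuous_sQ compat_sQ
lemma sX_π (p : Q) : sX (π p) = sQ p := compat_sQ.rp p
lemma sX_nonneg (x : X) : 0 ≤ sX x := sQ_nonneg _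
lemma sX_le (x : X) : sX x ≤ 1 := sQ_le _

lemma mem_C2 {x : X} : x ∈ C2 ↔ sX x = 0 := by
  constructor
  · rintro ⟨q, hq, hs⟩
    obtain ⟨p, rfl⟩ := toSq_surj q
    have hk := (kk_eq_iff p).1 hs
    have : x = π ⟨p.1, p.2, hk.ge⟩ := Subtype.ext hq.symm
    rw [this, sX_π]; exact sQ_eq_zero.2 hk
  · intro h
    refine ⟨toSq (QD (rp x)), congrArg Subtype.val (π_rp x), (kk_eq_iff _).2 (sQ_eq_zero.1 h)⟩

lemma C1_rep {x : X} (h : x ∈ C1) : ∃ p : Q, π p = x ∧ (p.1.2 = 1 ∨ p.1.2 = -1) := by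
  obtain ⟨q, hq, hs⟩ := h
  obtain ⟨p, rfl⟩ := toSq_surj q
  refine ⟨⟨p.1, p.2, (mem_Xset p).1 (hq ▸ x.2)⟩, Subtype.ext hq, hs⟩

lemma mem_C1 {p : Q} (h : p.1.2 = 1 ∨ p.1.2 = -1) : π p ∈ C1 := ⟨_, rfl, h⟩

lemma sX_C1 {x : X} (h : x ∈ C1) : sX x = 1 := by
  obtain ⟨p, rfl, h'⟩ := C1_rep h
  rw [sX_π, sQ_eq_one]
  refine le_antisymm p.2.1 (le_max_of_le_right ?_)
  rcases h' with hh | hh <;> simp [hh]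

/-- radial move on `X` -/
noncomputable def radX (s : ℝ) (x : X) : X := π (Rad (rp x) s)

lemma sX_radX (s : ℝ) (x : X) : sX (radX s x) = clp s := by rw [radX, sX_π, sQ_Rad]
lemma radX_self (x : X) : radX (sX x) x = x := by rw [radX, sX, Rad_self, π_rp]

lemma Rad_clp (p : Q) {s t : ℝ} (h : clp s = clp t) : Rad p s = Rad p t := by
  apply Subtype.ext; simp [Rad, lam, h]

lemma radX_of {x : X} {s : ℝ} (h : clp s = sX x) : radX s x = x := by
  conv_rhs => rw [← radX_self x]
  unfold radX
  rw [Rad_clp]; rw [h, clp_of (sX_nonneg x) (sX_le x)]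

lemma continuous_radX {T : Type*} [TopologicalSpace T] {φ : T × X → ℝ} (hφ : Continuous φ)
    (h1 : ∀ t x, sX x = 1 → 1 ≤ φ (t, x)) : Continuous fun q : T × X => radX (φ q) q.2 := by
  have h := desc_cont (T := T) (g := fun q => π (Rad q.2 (φ (q.1, π q.2)))) ?_ ?_
  · refine h.congr ?_
    rintro ⟨t, x⟩
    simp only [radX, π_rp]
  · have := continuous_π
    refine this.comp (continuous_Rad.comp (g := fun q : Q × ℝ => Rad q.1 q.2)
      (f := fun q : T × Q => (q.2, φ (q.1, π q.2))) ?_)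
    fun_prop
  · intro t p q e1 e2 e3
    have e := π_glue e1 e2 e3
    have s1 : sQ p = 1 := sQ_eq_one.2 (nn_edge (by simp [e1]))
    have s2 : sQ q = 1 := sQ_eq_one.2 (nn_edge (by simp [e2]))
    have hp : Rad p (φ (t, π p)) = p := by
      conv_rhs => rw [← Rad_self p]
      apply Rad_clp
      rw [clp_one_le (h1 _ _ (by rw [sX_π, s1])), s1, clp_one_le le_rfl]
    have hq : Rad q (φ (t, π q)) = q := by
      conv_rhs => rw [← Rad_self q]
      apply Rad_clp
      rw [clp_one_le (h1 _ _ (by rw [sX_π, s2])), s2, clp_one_le le_rfl]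
    show π _ = π _
    rw [hp, hq, e]

/-! ### The maps to and from the theta graph -/

/-- the outer point -/
noncomputable def out (p : Q) : Q := Rad p 1

lemma nn_out (p : Q) : nn (out p) = 1 := by
  rw [← sQ_eq_one, out, sQ_Rad, clp_one_le le_rfl]

/-- formula for the map to the theta graph -/
noncomputable def psv (p : ℝ × ℝ) : ℝ × (Fin 3 → ℝ) :=
  ((1 - p.1 * p.2) / 2, ![(1 - p.1 ^ 2) * (1 - p.2) / 8, (1 - p.1 ^ 2) * (1 + p.2) / 8,
    (1 - p.2 ^ 2) / 4])

lemma cases_out {p : ℝ × ℝ} (h : nn p = 1) : p.2 = -1 ∨ p.2 = 1 ∨ p.1 = -1 ∨ p.1 = 1 := by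
  unfold nn at h
  rcases max_choice |p.1| |p.2| with e | e <;> rw [e] at h <;>
    rcases (abs_eq zero_le_one).1 h with h | h <;> simp [h]

lemma psv_bot (u : ℝ) : psv (u, -1) = ((1 + u) / 2, Pi.single 0 ((1 + u) / 2 * (1 - (1 + u) / 2))) := by
  refine Prod.ext (by simp [psv]) ?_
  funext j; fin_cases j <;> simp [psv]; ring
lemma psv_top (u : ℝ) : psv (u, 1) = ((1 - u) / 2, Pi.single 1 ((1 - u) / 2 * (1 - (1 - u) / 2))) := by
  refine Prod.ext (by simp [psv]) ?_
  funext j; fin_cases j <;> simp [psv]; ring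
lemma psv_left (v : ℝ) : psv (-1, v) = ((1 + v) / 2, Pi.single 2 ((1 + v) / 2 * (1 - (1 + v) / 2))) := by
  refine Prod.ext (by simp [psv]) ?_
  funext j; fin_cases j <;> simp [psv]; ring
lemma psv_right (v : ℝ) : psv (1, v) = ((1 - v) / 2, Pi.single 2 ((1 - v) / 2 * (1 - (1 - v) / 2))) := by
  refine Prod.ext (by simp [psv]) ?_
  funext j; fin_cases j <;> simp [psv]; ring

lemma psv_mem {p : ℝ × ℝ} (h : nn p = 1) : psv p ∈ Th := by
  obtain ⟨⟨h1, h2⟩, h3, h4⟩ := nn_le_iff.1 h.le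
  obtain ⟨u, v⟩ := p
  simp only at h1 h2 h3 h4
  rcases cases_out h with e | e | e | e <;> simp only at e <;> subst e
  · exact ⟨0, _, by linarith, by linarith, psv_bot u⟩
  · exact ⟨1, _, by linarith, by linarith, psv_top u⟩
  · exact ⟨2, _, by linarith, by linarith, psv_left v⟩
  · exact ⟨2, _, by linarith, by linarith, psv_right v⟩

/-- map from the punctured square to the theta graph -/
noncomputable def psQ (p : Q) : Theta := ⟨psv (out p), psv_mem (nn_out p)⟩

lemma continuous_out : Continuous out :=
  continuous_Rad.comp (continuous_id.prodMk continuous_const : Continuous fun p : Q => (p, (1:ℝ)))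

lemma continuous_psQ : Continuous psQ := by
  have h : Continuous psv := by
    refine Continuous.prodMk (by fun_prop) ?_
    refine continuous_pi fun j => ?_
    fin_cases j <;> simp <;> fun_prop
  exact Continuous.subtype_mk (h.comp (continuous_subtype_val.comp continuous_out)) _

lemma out_eq {p : Q} (h : nn p = 1) : out p = p := by
  have := sQ_eq_one.2 h
  conv_rhs => rw [← Rad_self p, this]
  rfl

lemma compat_psQ : Compat psQ := by
  intro p q h1 h2 h3
  apply Subtype.ext
  simp only [psQ]
  rw [out_eq (nn_edge (by simp [h1])), out_eq (nn_edge (by simp [h2]))]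
  obtain ⟨⟨u, v⟩, hp⟩ := p
  obtain ⟨⟨u', v'⟩, hq⟩ := q
  simp only at h1 h2 h3
  subst h1 h2 h3
  simp only [psv_left, psv_right]
  rfl

/-- map to the theta graph -/
noncomputable def psi (x : X) : Theta := psQ (rp x)
lemma continuous_psi : Continuous psi := desc_cont' continuous_psQ compat_psQ
lemma psi_π (p : Q) : psi (π p) = psQ p := compat_psQ.rp p

lemma psi_C1 {x : X} (h : x ∈ C1) : psi x ∈ Ct := by
  have hs := sX_C1 h
  obtain ⟨p, rfl, h'⟩ := C1_rep h
  rw [psi_π]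
  rw [sX_π] at hs
  simp only [psQ, Ct, mem_ofPred_eq]
  rw [out_eq (sQ_eq_one.1 hs)]
  rcases h' with h' | h' <;> simp [psv, h']

lemma Q_of {u v : ℝ} (h : nn (u, v) = 1) : (u, v) ∈ Q := ⟨h.le, kk_of_nn h⟩

lemma clp_abs (r : ℝ) : |2 * clp r - 1| ≤ 1 := by
  rw [abs_le]; constructor <;> linarith [clp_nonneg r, clp_le r]

/-- the edges of the theta graph in the punctured square -/
noncomputable def eP (l : Fin 3) (r : ℝ) : Q :=
  if l = 0 then ⟨(2 * clp r - 1, -1), Q_of (by simp [nn, clp_abs])⟩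
  else if l = 1 then ⟨(1 - 2 * clp r, 1), Q_of (by
    rw [nn]; simp only [abs_one]; rw [abs_sub_comm]; exact max_eq_right (clp_abs r))⟩
  else ⟨(-1, 2 * clp r - 1), Q_of (by simp [nn, clp_abs])⟩

lemma continuous_eP (l : Fin 3) : Continuous (eP l) := by
  have := continuous_clp
  unfold eP
  split_ifs
  · exact Continuous.subtype_mk (by fun_prop) _
  · exact Continuous.subtype_mk (by fun_prop) _
  · exact Continuous.subtype_mk (by fun_prop) _

lemma nn_eP (l : Fin 3) (r : ℝ) : nn (eP l r) = 1 := by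
  unfold eP
  split_ifs
  · simp [nn, clp_abs]
  · show nn (1 - 2 * clp r, 1) = 1
    rw [nn]; simp only [abs_one]; rw [abs_sub_comm]; exact max_eq_right (clp_abs r)
  · simp [nn, clp_abs]

lemma eP_zero (l : Fin 3) {r : ℝ} (h : clp r = 0) : π (eP l r) = π (eP 0 r) := by
  fin_cases l
  · rfl
  · symm; apply π_glue <;> simp [eP, h]
  · congr 1; simp [eP, h]

lemma eP_one (l : Fin 3) {r : ℝ} (h : clp r = 1) : π (eP l r) = π (eP 0 r) := by
  fin_cases l
  · rfl
  · apply π_glue <;> simp [eP, h] <;> norm_num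
  · apply π_glue <;> simp [eP, h] <;> norm_num

/-- map from the theta graph -/
noncomputable def psi' (z : Theta) : X := π (eP (lab z) z.1.1)

lemma psi'_eq {z : Theta} {l : Fin 3} (h : z ∈ Pc l) : psi' z = π (eP l z.1.1) := by
  have h0 : 0 ≤ z.1.1 := pos_nonneg false z
  have h1 : z.1.1 ≤ 1 := pos_le false z
  rcases h0.eq_or_lt with e | e
  · rw [psi', eP_zero _ (clp_nonpos e.ge), ← eP_zero l (clp_nonpos e.ge)]
  rcases h1.eq_or_lt with e' | e'
  · rw [psi', eP_one _ (clp_one_le e'.ge), ← eP_one l (clp_one_le e'.ge)]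
  · rw [psi', Pc_unique (lab_mem z) h false e e']

lemma continuous_psi' : Continuous psi' := by
  refine (locallyFinite_of_finite _).continuous (f := Pc) (by ext z; simp [exists_Pc])
    isClosed_Pc ?_
  intro l
  have : Continuous fun z : Theta => π (eP l z.1.1) :=
    continuous_π.comp ((continuous_eP l).comp (by fun_prop))
  exact this.continuousOn.congr fun z hz => psi'_eq hz

lemma sX_psi' (z : Theta) : sX (psi' z) = 1 := by
  rw [psi', sX_π, sQ_eq_one, nn_eP]

lemma psi'_Ct {z : Theta} (h : z ∈ Ct) : psi' z ∈ C1 := by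
  have key : ∀ l : Fin 3, l ≠ 2 → z ∈ Pc l → psi' z ∈ C1 := by
    intro l hl hz
    rw [psi'_eq hz]
    apply mem_C1
    fin_cases l
    · right; simp [eP]
    · left; simp [eP]
    · exact absurd rfl hl
  by_cases hl : lab z = 2
  · refine key 0 (by decide) ?_
    intro j hj
    by_cases hj2 : j = 2
    · rw [hj2]; exact h
    · exact lab_mem z j (hl ▸ hj2)
  · exact key _ hl (lab_mem z)

lemma psi'_psi (x : X) : psi' (psi x) = radX 1 x := by
  obtain ⟨p, rfl⟩ := π_surj x
  have e : radX 1 (π p) = π (out p) := by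
    have hc : Compat fun p => π (out p) := by
      intro p q h1 h2 h3
      simp only [out_eq (nn_edge (p := p) (by simp [h1])), out_eq (nn_edge (p := q) (by simp [h2]))]
      exact π_glue h1 h2 h3
    exact hc.rp p
  rw [e, psi_π]
  have hn := nn_out p
  have hm := psv_mem hn
  have e2 : psQ p = ⟨psv (out p), hm⟩ := rfl
  rw [e2]
  clear e e2
  generalize out p = q at *
  obtain ⟨⟨u, v⟩, hq⟩ := q
  obtain ⟨⟨h1, h2⟩, h3, h4⟩ := nn_le_iff.1 hn.le
  simp only at h1 h2 h3 h4 hn hm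
  rcases cases_out hn with e | e | e | e <;> simp only at e <;> subst e
  · rw [psi'_eq (l := 0) (by intro j hj; simp [psv_bot, hj])]
    congr 1
    have : clp ((1 + u) / 2) = (1 + u) / 2 := clp_of (by linarith) (by linarith)
    simp [psv_bot, eP, this]; ring
  · rw [psi'_eq (l := 1) (by intro j hj; simp [psv_top, hj])]
    congr 1
    have : clp ((1 - u) / 2) = (1 - u) / 2 := clp_of (by linarith) (by linarith)
    simp [psv_top, eP, this]; ring
  · rw [psi'_eq (l := 2) (by intro j hj; simp [psv_left, hj])]
    congr 1
    have : clp ((1 + v) / 2) = (1 + v) / 2 := clp_of (by linarith) (by linarith)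
    simp [psv_left, eP, this]; ring
  · rw [psi'_eq (l := 2) (by intro j hj; simp [psv_right, hj])]
    have : clp ((1 - v) / 2) = (1 - v) / 2 := clp_of (by linarith) (by linarith)
    apply π_glue
    · simp [eP]
    · simp
    · simp [psv_right, eP, this]; ring

/-! ### The circle `C1` -/

lemma Q_top {u : ℝ} (v : ℝ) (hv : |v| = 1) (hu : |u| ≤ 1) : (u, v) ∈ Q :=
  Q_of (by simp [nn, hv, hu])

/-- horizontal edges -/
noncomputable def hor (v : ℝ) (hv : |v| = 1) (r : Icc (-1 : ℝ) 1) : X :=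
  π ⟨(r.1, v), Q_top v hv (abs_le.2 r.2)⟩

lemma continuous_hor (v : ℝ) (hv : |v| = 1) : Continuous (hor v hv) :=
  continuous_π.comp (Continuous.subtype_mk (by fun_prop) _)

lemma C1_eq : C1 = range (hor 1 (by simp)) ∪ range (hor (-1) (by simp)) := by
  ext x
  constructor
  · intro h
    obtain ⟨⟨⟨u, v⟩, hp⟩, rfl, h'⟩ := C1_rep h
    have := (nn_le_iff.1 hp.1).1
    rcases h' with h' | h' <;> simp only at h' <;> subst h'
    · left; exact ⟨⟨u, this⟩, rfl⟩
    · right; exact ⟨⟨u, this⟩, rfl⟩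
  · rintro (⟨r, rfl⟩ | ⟨r, rfl⟩)
    · exact mem_C1 (Or.inl rfl)
    · exact mem_C1 (Or.inr rfl)

lemma isPreconnected_C1 : IsPreconnected C1 := by
  rw [C1_eq]
  have : PreconnectedSpace (Icc (-1 : ℝ) 1) := Subtype.preconnectedSpace isPreconnected_Icc
  refine IsPreconnected.union (hor 1 (by simp) ⟨1, by simp⟩) ⟨_, rfl⟩
    ⟨⟨-1, by simp⟩, ?_⟩ (isPreconnected_range (continuous_hor _ _))
    (isPreconnected_range (continuous_hor _ _))
  apply π_glue <;> simp

/-! ### Assembly -/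

lemma cont_of_closed {α β : Type*} [TopologicalSpace α] [TopologicalSpace β] {f : α → β}
    {s t : Set α} (hs : IsClosed s) (ht : IsClosed t) (hst : ∀ x, x ∈ s ∨ x ∈ t)
    (h1 : Continuous fun x : s => f x) (h2 : Continuous fun x : t => f x) : Continuous f := by
  rw [← continuousOn_univ, ← show s ∪ t = univ from eq_univ_of_forall hst]
  exact ContinuousOn.union_of_isClosed (continuousOn_iff_continuous_domRestrict.2 h1)
    (continuousOn_iff_continuous_domRestrict.2 h2) hs ht

/-- stretching function -/
noncomputable def phs (q : unitInterval × X) : ℝ := max 0 ((2 * sX q.2 - q.1) / (2 - q.1))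

lemma continuous_phs : Continuous phs := by
  have := continuous_sX
  refine Continuous.max continuous_const (Continuous.div (by fun_prop) (by fun_prop) ?_)
  intro q; linarith [q.1.2.2]

/-- stretching the collar -/
noncomputable def stc (q : unitInterval × X) : X := radX (phs q) q.2

lemma continuous_stc : Continuous stc := by
  refine continuous_radX continuous_phs ?_
  intro t x h
  rw [phs, h]
  have : (2 : ℝ) - t ≠ 0 := by linarith [t.2.2]
  simp [div_self this]

lemma stc_zero (x : X) : stc (0, x) = x := by
  apply radX_of
  have : phs (0, x) = sX x := by simp [phs, sX_nonneg]
  rw [this, clp_of (sX_nonneg x) (sX_le x)]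

lemma stc_one {x : X} (t : unitInterval) (h : sX x = 1) : stc (t, x) = x := by
  apply radX_of
  have h2 : (2 : ℝ) - t ≠ 0 := by linarith [t.2.2]
  have : phs (t, x) = 1 := by simp [phs, h, div_self h2]
  rw [this, h, clp_one_le le_rfl]

lemma stc_C2 {x : X} {t : unitInterval} (h : 2 * sX x ≤ t) : stc (t, x) ∈ C2 := by
  rw [mem_C2, stc, sX_radX]
  have : phs (t, x) = 0 := by
    refine max_eq_left (div_nonpos_of_nonpos_of_nonneg ?_ ?_)
    · simp only; linarith
    · linarith [t.2.2]
  rw [this, clp_nonpos le_rfl]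

/-- Stage 1: make the map constant on `C2`. -/
lemma stage1 (f : C(X, X)) (hf : BoundaryPreserving f) (h11 : MapsTo f C1 C1)
    (h2 : Inessential (restrictMap f (hf.mono_left Set.subset_union_right : MapsTo f C2 Bd))) :
    ∃ f1 : C(X, X), ∃ b ∈ Bd, BoundaryHomotopic f f1 ∧ (∀ x ∈ C2, f1 x = b) ∧
      ∀ x ∈ C1, f1 x = f x := by
  classical
  obtain ⟨b, ⟨K⟩⟩ := h2
  let E : unitInterval × X → X := fun q =>
    if h : 2 * sX q.2 ≤ q.1 then
      (K (projIcc 0 1 zero_le_one (q.1 - 2 * sX q.2), ⟨stc q, stc_C2 h⟩) : Bd).1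
    else f (stc q)
  have hE1 : ∀ q : unitInterval × X, ∀ h : 2 * sX q.2 ≤ q.1, E q =
      (K (projIcc 0 1 zero_le_one (q.1 - 2 * sX q.2), ⟨stc q, stc_C2 h⟩) : Bd).1 :=
    fun q h => dif_pos h
  have hE2 : ∀ q : unitInterval × X, q.1 ≤ 2 * sX q.2 → E q = f (stc q) := by
    intro q h
    rcases h.eq_or_lt with h | h
    · rw [hE1 q h.ge]
      have e : projIcc (0:ℝ) 1 zero_le_one (q.1 - 2 * sX q.2) = 0 := by rw [h]; simp
      have e' := K.apply_zero ⟨stc q, stc_C2 h.ge⟩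
      rw [e]
      exact congrArg Subtype.val e'
    · exact dif_neg (not_le.2 h)
  have hs := continuous_sX
  have hstc := continuous_stc
  have hEc : Continuous E := by
    refine cont_of_closed (s := {q | 2 * sX q.2 ≤ q.1}) (t := {q | q.1 ≤ 2 * sX q.2})
      (isClosed_le (by fun_prop) (by fun_prop)) (isClosed_le (by fun_prop) (by fun_prop))
      (fun q => le_total (2 * sX q.2) (q.1 : ℝ)) ?_ ?_
    · have : (fun q : {q : unitInterval × X | 2 * sX q.2 ≤ q.1} => E q) = fun q =>
          (K (projIcc 0 1 zero_le_one (q.1.1 - 2 * sX q.1.2), ⟨stc q.1, stc_C2 q.2⟩) : Bd).1 :=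
        funext fun q => hE1 q.1 q.2
      rw [this]
      refine continuous_subtype_val.comp (K.continuous.comp (Continuous.prodMk ?_ ?_))
      · exact continuous_projIcc.comp (by fun_prop)
      · exact Continuous.subtype_mk (by fun_prop) _
    · have : (fun q : {q : unitInterval × X | q.1 ≤ 2 * sX q.2} => E q) = fun q => f (stc q.1) :=
        funext fun q => hE2 q.1 q.2
      rw [this]
      fun_prop
  have hC1 : ∀ t : unitInterval, ∀ x ∈ C1, E (t, x) = f x := by
    intro t x hx
    have := sX_C1 hx
    rw [hE2 _ (by simp only [this]; linarith [t.2.2]), stc_one t this]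
  let f1 : C(X, X) := ⟨fun x => E (1, x), by fun_prop⟩
  refine ⟨f1, b.1, b.2, ⟨⟨⟨E, hEc⟩, ?_, fun x => rfl⟩, ?_⟩, ?_, fun x hx => hC1 1 x hx⟩
  · intro x
    show E (0, x) = f x
    rw [hE2 _ (by simpa using sX_nonneg x), stc_zero]
  · intro x hx t
    show E (t, x) ∈ Bd
    rcases hx with hx | hx
    · rw [hC1 t x hx]; exact Or.inl (h11 hx)
    · rw [hE1 _ (by simp [mem_C2.1 hx, t.2.1])]
      exact Subtype.property _
  · intro x hx
    show E (1, x) = b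
    rw [hE1 _ (by simp [mem_C2.1 hx])]
    have e : projIcc (0:ℝ) 1 zero_le_one ((1 : unitInterval) - 2 * sX x) = 1 := by
      rw [mem_C2.1 hx]; simp
    simp only [e]
    exact congrArg Subtype.val (K.apply_one _)

/-- Stage 2: the lift. -/
lemma lift_exists (f : C(X, X)) (h11 : MapsTo f C1 C1) (b : X) (hb : ∀ x ∈ C2, f x = b)
    (he : ¬ Inessential (restrictMap f h11)) :
    ∃ F : C(X, Acov), (∀ x, Zc.proj (F x) = psi (f x)) ∧ ∀ x ∈ C1, F x = sec (psi (f x)) := by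
  classical
  have hpsi := continuous_psi
  have hpsi' := continuous_psi'
  let Fs : D → Theta := fun p => if h : 1 ≤ kk p then psi (f (π ⟨p.1, p.2, h⟩)) else psi b
  have Fs1 : ∀ p : D, ∀ h : 1 ≤ kk p, Fs p = psi (f (π ⟨p.1, p.2, h⟩)) := fun p h => dif_pos h
  have Fs2 : ∀ p : D, kk p ≤ 1 → Fs p = psi b := by
    intro p h
    rcases h.eq_or_lt with h | h
    · rw [Fs1 p h.ge, hb]
      rw [mem_C2, sX_π, sQ_eq_zero]; exact h
    · exact dif_neg (not_le.2 h)
  have hkk := continuous_kk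
  have hπ := continuous_π
  have Fsc : Continuous Fs := by
    refine cont_of_closed (s := {p : D | 1 ≤ kk p}) (t := {p : D | kk p ≤ 1})
      (isClosed_le (by fun_prop) (by fun_prop)) (isClosed_le (by fun_prop) (by fun_prop))
      (fun q => le_total 1 (kk q.1)) ?_ ?_
    · have : (fun p : {p : D | 1 ≤ kk p} => Fs p) = fun p => psi (f (π ⟨p.1.1, p.1.2, p.2⟩)) :=
        funext fun q => Fs1 q.1 q.2
      rw [this]
      refine hpsi.comp (f.continuous.comp (hπ.comp (Continuous.subtype_mk (by fun_prop) _)))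
    · have : (fun p : {p : D | kk p ≤ 1} => Fs p) = fun _ => psi b :=
        funext fun q => Fs2 q.1 q.2
      rw [this]; exact continuous_const
  have Fsg : ∀ p q : D, p.1.1 = -1 → q.1.1 = 1 → p.1.2 = -q.1.2 → Fs p = Fs q := by
    intro p q h1 h2 h3
    have k1 : 1 ≤ kk p := le_max_of_le_left (by rw [h1]; norm_num)
    have k2 : 1 ≤ kk q := le_max_of_le_left (by rw [h2]; norm_num)
    rw [Fs1 p k1, Fs1 q k2, π_glue (p := ⟨p.1, p.2, k1⟩) (q := ⟨q.1, q.2, k2⟩) h1 h2 h3]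
  -- vertical flip
  have hfl : ∀ (t : unitInterval) (p : Q), (p.1.1, p.1.2 * (1 - 2 * t)) ∈ D := by
    intro t p
    obtain ⟨⟨h1, h2⟩, h3, h4⟩ := nn_le_iff.1 p.2.1
    have := t.2.1
    have := t.2.2
    refine mem_D_of h1 h2 ?_ ?_ <;> nlinarith
  let g : unitInterval × Q → Theta := fun q => Fs ⟨_, hfl q.1 q.2⟩
  have hg : Continuous g := Fsc.comp (Continuous.subtype_mk (by fun_prop) _)
  have hgc : ∀ t, Compat fun p => g (t, p) := by
    intro t p q h1 h2 h3
    refine Fsg _ _ h1 h2 ?_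
    simp [h3]
  let H : C(unitInterval × C1, Theta) := ⟨fun q => g (q.1, rp q.2.1),
    (desc_cont hg hgc).comp (Continuous.prodMk (by fun_prop) (by fun_prop) :
      Continuous fun q : unitInterval × C1 => (q.1, q.2.1))⟩
  have Hπ : ∀ (t : unitInterval) (p : Q) (h : π p ∈ C1), H (t, ⟨π p, h⟩) = Fs ⟨_, hfl t p⟩ :=
    fun t p h => (hgc t).rp p
  let s0 : C(C1, Acov) := ⟨fun c => sec (psi (f c)),
    continuous_sec.comp (Continuous.subtype_mk (p := fun z => z ∈ Ct)
      (f := fun c : C1 => psi (f c)) (by fun_prop) (fun c => psi_C1 (h11 c.2)))⟩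
  have H0 : ∀ c, H (0, c) = Zc.proj (s0 c) := by
    rintro ⟨x, hx⟩
    obtain ⟨p, rfl⟩ := π_surj x
    rw [Hπ]
    have : (⟨_, hfl 0 p⟩ : D) = QD p := Subtype.ext (Prod.ext rfl (by simp [QD]))
    rw [this, Fs1 (QD p) p.2.2]; rfl
  let Hh := isCov.liftHomotopy H s0 H0
  have Hl : ∀ q, Zc.proj (Hh q) = H q := fun q => congrFun (isCov.liftHomotopy_lifts H s0 H0) q
  have Hz : ∀ c, Hh (0, c) = s0 c := isCov.liftHomotopy_zero H s0 H0
  have hpc : PreconnectedSpace C1 := Subtype.preconnectedSpace isPreconnected_C1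
  have hct : ∀ c : C1, H (1, c) ∈ Ct := by
    rintro ⟨x, hx⟩
    obtain ⟨p, rfl, h'⟩ := C1_rep hx
    rw [Hπ]
    have hk : (p.1.1, p.1.2 * (1 - 2 * (1 : unitInterval))) ∈ Q := by
      apply Q_top _ _ (abs_le.2 (nn_le_iff.1 p.2.1).1)
      rcases h' with h' | h' <;> rw [h'] <;> norm_num
    rw [Fs1 ⟨_, hfl 1 p⟩ hk.2]
    refine psi_C1 (h11 (mem_C1 ?_))
    rcases h' with h' | h'
    · right; simp only; rw [h']; norm_num
    · left; simp only; rw [h']; norm_num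
  have hdich : (∀ c, Hh (1, c) = sec (Zc.proj (Hh (1, c)))) ∨
      ∀ c, Hh (1, c) ≠ sec (Zc.proj (Hh (1, c))) := by
    by_contra hcon
    push Not at hcon
    obtain ⟨⟨c1, hc1⟩, c2, hc2⟩ := hcon
    have hc : Continuous fun c : C1 => sec (Zc.proj (Hh (1, c))) := by
      simp only [Hl]
      exact continuous_sec.comp (Continuous.subtype_mk (p := fun z => z ∈ Ct)
        (f := fun c : C1 => H (1, c)) (by fun_prop) hct)
    have := isCov.eq_of_comp_eq (g₁ := fun c : C1 => Hh (1, c))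
      (g₂ := fun c : C1 => sec (Zc.proj (Hh (1, c)))) (by fun_prop) hc rfl c2 hc2
    exact hc1 (congrFun this c1)
  have hD := continuous_Dc
  rcases hdich with hall | hnone
  swap
  · -- the null-homotopic case
    exfalso
    apply he
    let W : C1 → Theta := fun c => Dc (0, Hh (1, c))
    have hW : Continuous W := by fun_prop
    have hWv : range W ⊆ {vtx false, vtx true} := by
      rintro _ ⟨c, rfl⟩
      obtain ⟨σ, hσ⟩ := Dc_zero_vtx (hnone c)
      show Dc _ ∈ _
      rw [hσ]; cases σ <;> simp
    have hsub : (range W).Subsingleton :=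
      (Set.Countable.isTotallyDisconnected
        ((Set.toFinite {vtx false, vtx true}).countable)) _ hWv (isPreconnected_range hW)
    obtain ⟨c0⟩ : Nonempty C1 := ⟨⟨hor 1 (by simp) ⟨0, by simp⟩, by rw [C1_eq]; left; exact ⟨_, rfl⟩⟩⟩
    refine ⟨⟨psi' (W c0), psi'_Ct (Dc_zero_mem _)⟩, ⟨⟨⟨fun q => ⟨psi' (Dc (0, Hh q)),
      psi'_Ct (Dc_zero_mem _)⟩, Continuous.subtype_mk (by fun_prop) _⟩, ?_, ?_⟩⟩⟩
    · intro c
      apply Subtype.ext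
      show psi' (Dc (0, Hh (0, c))) = f c
      rw [Hz]
      show psi' (Dc (0, sec (psi (f c)))) = f c
      rw [Dc_sec 0 (psi_C1 (h11 c.2)), psi'_psi]
      apply radX_of
      rw [sX_C1 (h11 c.2), clp_one_le le_rfl]
    · intro c
      apply Subtype.ext
      show psi' (W c) = psi' (W c0)
      rw [hsub ⟨c, rfl⟩ ⟨c0, rfl⟩]
  · -- the good case
    have htop : ∀ p : Q, (p.1.1, (1 : ℝ)) ∈ Q := fun p =>
      Q_top _ (by simp) (abs_le.2 (nn_le_iff.1 p.2.1).1)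
    let tp : Q → C1 := fun p => ⟨π ⟨_, htop p⟩, mem_C1 (Or.inl rfl)⟩
    let tt : Q → unitInterval := fun p => projIcc 0 1 zero_le_one ((1 - p.1.2) / 2)
    have htt : ∀ p : Q, (tt p : ℝ) = (1 - p.1.2) / 2 := by
      intro p
      have := (nn_le_iff.1 p.2.1).2
      simp only [tt]
      rw [projIcc_of_mem _ ⟨by linarith, by linarith⟩]
    let g2 : Q → Acov := fun p => Hh (tt p, tp p)
    have hg2 : Continuous g2 := by
      refine Hh.continuous.comp (Continuous.prodMk ?_ ?_)
      · exact continuous_projIcc.comp (by fun_prop)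
      · exact Continuous.subtype_mk (hπ.comp (Continuous.subtype_mk (by fun_prop) _)) _
    have hproj : ∀ p, Zc.proj (g2 p) = psi (f (π p)) := by
      intro p
      show Zc.proj (Hh (tt p, tp p)) = _
      rw [Hl, Hπ]
      have : (⟨_, hfl (tt p) ⟨_, htop p⟩⟩ : D) = QD p :=
        Subtype.ext (Prod.ext rfl (by simp only [QD, htt]; ring))
      rw [this, Fs1 (QD p) p.2.2]; rfl
    have hC : Compat g2 := by
      intro p q h1 h2 h3
      have := isCov.eq_of_comp_eq (g₁ := fun t : unitInterval => Hh (unitInterval.symm t, tp p))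
        (g₂ := fun t : unitInterval => Hh (t, tp q)) (by fun_prop) (by fun_prop) ?_ 0 ?_
      · have e := congrFun this (tt q)
        have e2 : unitInterval.symm (tt q) = tt p := by
          apply Subtype.ext
          rw [unitInterval.coe_symm_eq, htt, htt, h3]; ring
        rw [e2] at e
        exact e
      · funext t
        simp only [Function.comp]
        rw [Hl, Hl, Hπ, Hπ]
        refine Fsg _ _ h1 h2 ?_
        simp only [unitInterval.coe_symm_eq]; ring
      · simp only [unitInterval.symm_zero]
        rw [hall, Hl, Hz]
        show sec (H (1, tp p)) = sec (Zc.proj (s0 (tp q)))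
        rw [← H0, Hπ, Hπ]
        congr 1
        refine Fsg _ _ h1 h2 ?_
        norm_num
    refine ⟨⟨fun x => g2 (rp x), desc_cont' hg2 hC⟩, ?_, ?_⟩
    · intro x
      show Zc.proj (g2 (rp x)) = _
      rw [hproj, π_rp]
    · intro x hx
      obtain ⟨p, rfl, h'⟩ := C1_rep hx
      show g2 (rp (π p)) = _
      rw [hC.rp, ← hproj]
      rcases h' with h' | h'
      · have e : tt p = 0 := Subtype.ext (by rw [htt, h']; simp)
        show Hh (tt p, tp p) = sec (Zc.proj (Hh (tt p, tp p)))
        rw [e, Hz]; rfl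
      · have e : tt p = 1 := Subtype.ext (by rw [htt, h']; norm_num)
        show Hh (tt p, tp p) = sec (Zc.proj (Hh (tt p, tp p)))
        rw [e]; exact hall _

/-- pushing outwards -/
noncomputable def Drx (q : ℝ × X) : X := radX (max (sX q.2) (2 * q.1)) q.2

lemma continuous_Drx : Continuous Drx := by
  have hs := continuous_sX
  exact continuous_radX (φ := fun q : ℝ × X => max (sX q.2) (2 * q.1)) (by fun_prop)
    (fun t x h => by simp [h])

/-- Stage 3: the final deformation. -/
lemma stage3 (f : C(X, X)) (h11 : MapsTo f C1 C1) (b : X) (hbd : b ∈ Bd) (hb : ∀ x ∈ C2, f x = b)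
    (F : C(X, Acov)) (hF : ∀ x, Zc.proj (F x) = psi (f x)) (hFs : ∀ x ∈ C1, F x = sec (psi (f x))) :
    ∃ g : C(X, X), BoundaryHomotopic f g ∧ ∀ x : X, g x = x → x ∈ Bd := by
  classical
  obtain ⟨N, hN0, hN⟩ := Dc_big (isCompact_range F.continuous)
  have hpsi' := continuous_psi'
  have hs := continuous_sX
  have hD := continuous_Dc
  have hstc := continuous_stc
  let A : ℝ × X → X := fun q => Drx (q.1, f q.2)
  let B : ℝ × X → X := fun q => psi' (Dc (N * (2 - 2 * q.1), F q.2))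
  have hA : Continuous A := by
    have h0 : Continuous fun q : ℝ × X => (q.1, f q.2) :=
      continuous_fst.prodMk (f.continuous.comp continuous_snd)
    exact continuous_Drx.comp h0
  have hB : Continuous B := by
    have h0 : Continuous fun q : ℝ × X => (N * (2 - 2 * q.1), F q.2) :=
      Continuous.prodMk (by fun_prop) (F.continuous.comp continuous_snd)
    exact hpsi'.comp (hD.comp h0)
  let L : ℝ × X → X := fun q => if q.1 ≤ 1 / 2 then A q else B q
  have hLc : Continuous L := by
    refine Continuous.if_le hA hB continuous_fst continuous_const ?_
    · rintro ⟨t, x⟩ h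
      simp only at h
      subst h
      simp only [A, B, Drx]
      rw [hN _ ⟨x, rfl⟩ _ (by linarith)]
      rw [show (F x).1 = psi (f x) from hF x, psi'_psi]
      congr 1
      rw [show (2 : ℝ) * (1/2) = 1 by norm_num]; exact max_eq_right (sX_le _)
  have L0 : ∀ x, L (0, x) = f x := by
    intro x
    simp only [L, A, B, Drx]
    rw [if_pos (by norm_num)]
    apply radX_of
    simp [clp_of, sX_nonneg, sX_le]
  have L1 : ∀ x, L (1, x) ∈ C1 := by
    intro x
    simp only [L, A, B, Drx]
    rw [if_neg (by norm_num)]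
    apply psi'_Ct
    norm_num
    exact Dc_zero_mem _
  have LC1 : ∀ t, ∀ x ∈ C1, L (t, x) = f x := by
    intro t x hx
    have h1 := sX_C1 (h11 hx)
    simp only [L, A, B, Drx]
    split_ifs with h
    · apply radX_of
      rw [h1]; exact clp_one_le (le_max_left _ _)
    · rw [hFs x hx, Dc_sec _ (psi_C1 (h11 hx)), psi'_psi]
      apply radX_of
      rw [h1, clp_one_le le_rfl]
  let G : unitInterval × X → X := fun q => L (min q.1 (2 * sX q.2), stc q)
  have hG : Continuous G := hLc.comp (by fun_prop)
  let g : C(X, X) := ⟨fun x => G (1, x), by fun_prop⟩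
  refine ⟨g, ⟨⟨⟨G, hG⟩, ?_, fun x => rfl⟩, ?_⟩, ?_⟩
  · intro x
    show L (min ((0 : unitInterval) : ℝ) (2 * sX x), stc (0, x)) = f x
    rw [stc_zero, min_eq_left (by simpa using sX_nonneg x)]
    exact L0 x
  · rintro x (hx | hx) t
    · left
      show L (_, stc (t, x)) ∈ C1
      rw [stc_one t (sX_C1 hx), LC1 _ x hx]
      exact h11 hx
    · show L (min (t : ℝ) (2 * sX x), stc (t, x)) ∈ Bd
      have h0 := mem_C2.1 hx
      rw [h0, min_eq_right (by simpa using t.2.1), mul_zero, L0, hb]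
      · exact hbd
      · apply stc_C2; rw [h0, mul_zero]; exact t.2.1
  · intro x hx
    have hx : L (min ((1 : unitInterval) : ℝ) (2 * sX x), stc (1, x)) = x := hx
    rw [show ((1 : unitInterval) : ℝ) = 1 from rfl] at hx
    rcases le_total 1 (2 * sX x) with h | h
    · rw [min_eq_left h] at hx
      left; rw [← hx]; exact L1 _
    · rw [min_eq_right h] at hx
      have h' := congrArg sX hx
      by_cases h4 : 2 * sX x ≤ 1 / 2
      · simp only [L, A, B, Drx] at h'
        rw [if_pos h4, sX_radX] at h'
        have h5 : clp (2 * (2 * sX x)) ≤ sX x := by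
          refine le_trans ?_ h'.le
          unfold clp
          exact max_le_max le_rfl (min_le_min (le_max_right _ _) le_rfl)
        rw [clp_of (by linarith [sX_nonneg x]) (by linarith)] at h5
        right
        rw [mem_C2]; linarith [sX_nonneg x]
      · simp only [L, A, B, Drx] at h'
        rw [if_neg h4, sX_psi'] at h'
        linarith

lemma BoundaryHomotopic.trans' {f g h : C(X, X)} (h1 : BoundaryHomotopic f g)
    (h2 : BoundaryHomotopic g h) : BoundaryHomotopic f h := by
  obtain ⟨H, hH⟩ := h1
  obtain ⟨K, hK⟩ := h2
  refine ⟨H.trans K, ?_⟩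
  intro x hx t
  rw [ContinuousMap.Homotopy.trans_apply]
  split_ifs
  · exact hH x hx _
  · exact hK x hx _

/-- A boundary semi-essential map of the punctured Möbius band with `f(C₁) ⊆ C₁`,
`f|C₁` essential and `f|C₂` inessential is boundary-homotopic to a map all of whose
fixed points lie on the boundary. -/
theorem stmt_10 (f : C(X, X)) (hf : BoundaryPreserving f)
    (h11 : MapsTo f C1 C1) (he1 : Essential (restrictMap f h11))
    (h2 : Inessential (restrictMap f (hf.mono_left Set.subset_union_right : MapsTo f C2 Bd))) :
    ∃ g : C(X, X), BoundaryHomotopic f g ∧ ∀ x : X, g x = x → x ∈ Bd := by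
  obtain ⟨f1, b, hb, hh, hc2, hc1⟩ := stage1 f hf h11 h2
  have h11' : MapsTo f1 C1 C1 := fun x hx => by rw [hc1 x hx]; exact h11 hx
  have he : ¬ Inessential (restrictMap f1 h11') := by
    have : restrictMap f1 h11' = restrictMap f h11 := by
      ext x; exact congrArg Subtype.val (hc1 x.1 x.2)
    rw [this]; exact he1
  obtain ⟨F, hF, hFs⟩ := lift_exists f1 h11' b hc2 he
  obtain ⟨g, hg, hfix⟩ := stage3 f1 h11' b hb hc2 F hF hFs
  exact ⟨g, hh.trans' hg, hfix⟩

end PMB
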